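/- Every automorphism of the free group F₂ on two generators that induces the identity map on the abelianization of F₂ is an inner automorphism. Equivalently, the kernel of the natural homomorphism Aut(F₂) → GL₂(ℤ) is exactly Inn(F₂). -/

import Mathlib

/-!
Nielsen reduction, performed up to simultaneous conjugation, takes any generating pair of `F₂` to
a pair of letters. Read backwards, it builds every generating pair from a pair `(a^±1, b^±1)` by
the moves `(u, v) ↦ (u, u v)`, swaps, inversions and conjugations. A move `(u, v⁻¹) ↦ (u, u v⁻¹)`
which mixes signs merely undoes the last positive move up to conjugation, so up to conjugation and
inversion of its entries every generating pair is a standard pair: it arises from `(a^±1, b^±1)`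
by positive moves and swaps alone. In such a pair nothing cancels, not even in the abelianization,
so one that is homologous to `(a, b)` up to signs consists of letters.
-/

namespace StandardPairs

section StandardPair

/-- The standard pairs of combinatorics on words over the letters `a`, `b` (up to order): the pairs
built from `(a, b)` by swaps and by the positive moves `(u, v) ↦ (u, u * v)`. -/
inductive StandardPair {M : Type*} [Mul M] (a b : M) : M → M → Prop
  | base : StandardPair a b a b
  | swap {u v : M} : StandardPair a b u v → StandardPair a b v u
  | mul_right {u v : M} : StandardPair a b u v → StandardPair a b u (u * v)

theorem StandardPair.eq_or_exists_eq_mul {M : Type*} [Mul M] {a b u v : M}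
    (h : StandardPair a b u v) :
    (u = a ∧ v = b) ∨ (u = b ∧ v = a) ∨
      (∃ t, StandardPair a b u t ∧ v = u * t) ∨ (∃ t, StandardPair a b v t ∧ u = v * t) := by
  induction h with
  | base => exact .inl ⟨rfl, rfl⟩
  | swap _ ih =>
    rcases ih with h | h | h | h
    · exact .inr (.inl h.symm)
    · exact .inl h.symm
    · exact .inr (.inr (.inr h))
    · exact .inr (.inr (.inl h))
  | mul_right h => exact .inr (.inr (.inl ⟨_, h, rfl⟩))

theorem StandardPair.toAdd_pos {M : Type*} [Monoid M] {a b u v : M} (h : StandardPair a b u v)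
    (e : M →* Multiplicative ℤ) (ha : (e a).toAdd = 1) (hb : (e b).toAdd = 1) :
    0 < (e u).toAdd ∧ 0 < (e v).toAdd := by
  induction h with
  | base => omega
  | swap _ ih => exact ih.symm
  | mul_right _ ih =>
    rw [map_mul, toAdd_mul]
    omega

theorem StandardPair.eq_or_swap_eq {M : Type*} [Monoid M] {a b u v : M}
    (h : StandardPair a b u v) (e : M →* Multiplicative ℤ) (ha : (e a).toAdd = 1)
    (hb : (e b).toAdd = 1) (hu : (e u).toAdd = 1) (hv : (e v).toAdd = 1) :
    (u = a ∧ v = b) ∨ (u = b ∧ v = a) := by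
  rcases h.eq_or_exists_eq_mul with h | h | ⟨t, ht, rfl⟩ | ⟨t, ht, rfl⟩
  · exact .inl h
  · exact .inr h
  · have := ht.toAdd_pos e ha hb
    rw [map_mul, toAdd_mul] at hv
    omega
  · have := ht.toAdd_pos e ha hb
    rw [map_mul, toAdd_mul] at hu
    omega

variable {G : Type*} [Group G] {a b α β u v x y : G}

/-- The pair `(x, y)` becomes, after a simultaneous conjugation and possibly inverting `x` or `y`,
a standard pair over the letters `a` or `a⁻¹` and `b` or `b⁻¹`. -/
def IsConjStandard (a b x y : G) : Prop :=
  ∃ α β u v g : G, (α = a ∨ α = a⁻¹) ∧ (β = b ∨ β = b⁻¹) ∧ StandardPair α β u v ∧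
    (g * x * g⁻¹ = u ∨ g * x * g⁻¹ = u⁻¹) ∧ (g * y * g⁻¹ = v ∨ g * y * g⁻¹ = v⁻¹)

namespace IsConjStandard

theorem of_standardPair (hα : α = a ∨ α = a⁻¹) (hβ : β = b ∨ β = b⁻¹)
    (h : StandardPair α β u v) : IsConjStandard a b u v :=
  ⟨α, β, u, v, 1, hα, hβ, h, by simp, by simp⟩

theorem swap (h : IsConjStandard a b x y) : IsConjStandard a b y x := by
  obtain ⟨α, β, u, v, g, hα, hβ, huv, hx, hy⟩ := h
  exact ⟨α, β, v, u, g, hα, hβ, huv.swap, hy, hx⟩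

theorem inv_left (h : IsConjStandard a b x y) : IsConjStandard a b x⁻¹ y := by
  obtain ⟨α, β, u, v, g, hα, hβ, huv, hx, hy⟩ := h
  refine ⟨α, β, u, v, g, hα, hβ, huv, ?_, hy⟩
  rw [← conj_inv]
  rcases hx with hx | hx <;> simp [hx]

theorem inv_right (h : IsConjStandard a b x y) : IsConjStandard a b x y⁻¹ :=
  h.swap.inv_left.swap

theorem of_conj (q : G) (h : IsConjStandard a b (q * x * q⁻¹) (q * y * q⁻¹)) :
    IsConjStandard a b x y := by
  obtain ⟨α, β, u, v, g, hα, hβ, huv, hx, hy⟩ := h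
  refine ⟨α, β, u, v, g * q, hα, hβ, huv, ?_, ?_⟩
  · simpa [mul_assoc] using hx
  · simpa [mul_assoc] using hy

theorem mul_inv_of_standardPair (hα : α = a ∨ α = a⁻¹) (hβ : β = b ∨ β = b⁻¹)
    (h : StandardPair α β u v) : IsConjStandard a b u (u * v⁻¹) := by
  have inv_letter {s c : G} (hs : s = c ∨ s = c⁻¹) : s⁻¹ = c ∨ s⁻¹ = c⁻¹ := by
    rcases hs with rfl | rfl <;> simp
  rcases h.eq_or_exists_eq_mul with ⟨rfl, rfl⟩ | ⟨rfl, rfl⟩ | ⟨t, ht, rfl⟩ | ⟨t, ht, rfl⟩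
  · exact of_standardPair hα (inv_letter hβ) StandardPair.base.mul_right
  · exact of_standardPair (inv_letter hα) hβ StandardPair.base.swap.mul_right
  · apply of_conj u⁻¹
    simpa [mul_assoc] using (of_standardPair hα hβ ht).inv_right
  · apply of_conj v⁻¹
    simpa [mul_assoc] using (of_standardPair hα hβ ht.swap.mul_right.swap).inv_right.inv_right

theorem mul_right (h : IsConjStandard a b x y) : IsConjStandard a b x (x * y) := by
  obtain ⟨α, β, u, v, g, hα, hβ, huv, hx, hy⟩ := h
  apply of_conj g
  rw [← conj_mul]
  rcases hx with hx | hx <;> rcases hy with hy | hy <;> rw [hx, hy]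
  · exact of_standardPair hα hβ huv.mul_right
  · exact mul_inv_of_standardPair hα hβ huv
  · apply of_conj u
    simpa [mul_assoc] using (mul_inv_of_standardPair hα hβ huv).inv_left.inv_right
  · apply of_conj u
    simpa [mul_assoc] using (of_standardPair hα hβ huv.mul_right).inv_left.inv_right

end IsConjStandard

end StandardPair

open FreeGroup hiding map_inv map_mul

section GromovProduct

/-- The length of the longest common prefix of two lists, which on reduced words is the Gromov
product. -/
def commonPrefixLength {γ : Type*} [DecidableEq γ] : List γ → List γ → ℕ
  | x :: xs, y :: ys => if x = y then commonPrefixLength xs ys + 1 else 0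
  | _, _ => 0

theorem exists_append_of_commonPrefixLength {γ : Type*} [DecidableEq γ] :
    ∀ x y : List γ, ∃ P X Y, x = P ++ X ∧ y = P ++ Y ∧ P.length = commonPrefixLength x y ∧
      ∀ a ∈ X.head?, ∀ b ∈ Y.head?, a ≠ b
  | [], y => ⟨[], [], y, by simp [commonPrefixLength]⟩
  | x :: xs, [] => ⟨[], x :: xs, [], by simp [commonPrefixLength]⟩
  | x :: xs, y :: ys => by
    by_cases hxy : x = y
    · obtain ⟨P, X, Y, hx, hy, hP, hXY⟩ := exists_append_of_commonPrefixLength xs ys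
      exact ⟨x :: P, X, Y, by simp [hx], by simp [hxy, hy], by simp [commonPrefixLength, hxy, hP],
        hXY⟩
    · exact ⟨[], x :: xs, y :: ys, by simp, by simp, by simp [commonPrefixLength, hxy],
        by simpa using hxy⟩

theorem min_commonPrefixLength_le {γ : Type*} [DecidableEq γ] : ∀ x y z : List γ,
    min (commonPrefixLength x y) (commonPrefixLength y z) ≤ commonPrefixLength x z
  | [], _, _ => by simp [commonPrefixLength]
  | _ :: _, [], _ => by simp [commonPrefixLength]
  | _ :: _, _ :: _, [] => by simp [commonPrefixLength]
  | x :: xs, y :: ys, z :: zs => by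
    have := min_commonPrefixLength_le xs ys zs
    grind [commonPrefixLength]

variable {α : Type*} [DecidableEq α]

/-- The Gromov product `(x.norm + y.norm - (x⁻¹ * y).norm) / 2` of two elements of a free group,
encoded as the length of the longest common prefix of their reduced words. -/
def gromovProduct (x y : FreeGroup α) : ℕ := commonPrefixLength x.toWord y.toWord

theorem min_gromovProduct_le (x y z : FreeGroup α) :
    min (gromovProduct x y) (gromovProduct y z) ≤ gromovProduct x z :=
  min_commonPrefixLength_le _ _ _

theorem norm_mk_of_isReduced {L : List (α × Bool)} (hL : IsReduced L) :
    (mk L).norm = L.length := by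
  rw [FreeGroup.norm, toWord_mk, hL.reduce_eq]

theorem isReduced_invRev_append {β : Type*} {X Y : List (β × Bool)} (hX : IsReduced X)
    (hY : IsReduced Y) (hXY : ∀ a ∈ X.head?, ∀ b ∈ Y.head?, a ≠ b) :
    IsReduced (invRev X ++ Y) := by
  classical
  have hX' : IsReduced (invRev X) := .of_reduce_eq (by rw [reduce_invRev, hX.reduce_eq])
  refine List.IsChain.append hX' hY fun a ha b hb hab ↦ ?_
  have ha' : (a.1, !a.2) ∈ X.head? := by
    cases X with
    | nil => simp [invRev] at ha
    | cons c X =>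
      simp only [invRev, List.map_cons, List.reverse_cons, List.getLast?_append,
        List.getLast?_singleton, Option.some_or, Option.mem_some_iff] at ha
      simp [← ha]
  by_contra hne
  exact hXY _ ha' b hb (Prod.ext hab (Bool.not_eq_eq_eq_not.mpr (Bool.eq_not_of_ne hne)))

theorem exists_mul_of_gromovProduct (x y : FreeGroup α) :
    ∃ p x' y', x = p * x' ∧ y = p * y' ∧ p.norm = gromovProduct x y ∧
      x.norm = p.norm + x'.norm ∧ y.norm = p.norm + y'.norm ∧
      (x⁻¹ * y).norm = x'.norm + y'.norm := by
  obtain ⟨P, X, Y, hx, hy, hP, hXY⟩ := exists_append_of_commonPrefixLength x.toWord y.toWord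
  have hPX : IsReduced (P ++ X) := hx ▸ isReduced_toWord
  have hPY : IsReduced (P ++ Y) := hy ▸ isReduced_toWord
  have hX : IsReduced X := hPX.infix (List.suffix_append P X).isInfix
  have hY : IsReduced Y := hPY.infix (List.suffix_append P Y).isInfix
  have hP' : IsReduced P := hPX.infix (List.prefix_append P X).isInfix
  have hx' : x = mk P * mk X := by rw [mul_mk, ← hx, mk_toWord]
  have hy' : y = mk P * mk Y := by rw [mul_mk, ← hy, mk_toWord]
  have hxy : x⁻¹ * y = mk (invRev X ++ Y) := by
    rw [hx', hy', ← mul_mk, ← inv_mk]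
    group
  refine ⟨mk P, mk X, mk Y, hx', hy', ?_, ?_, ?_, ?_⟩
  · rw [norm_mk_of_isReduced hP', hP, gromovProduct]
  · rw [norm_mk_of_isReduced hP', norm_mk_of_isReduced hX, FreeGroup.norm, hx, List.length_append]
  · rw [norm_mk_of_isReduced hP', norm_mk_of_isReduced hY, FreeGroup.norm, hy, List.length_append]
  · rw [hxy, norm_mk_of_isReduced (isReduced_invRev_append hX hY hXY), norm_mk_of_isReduced hX,
      norm_mk_of_isReduced hY, List.length_append, invRev_length]

theorem norm_inv_mul_add_two_mul_gromovProduct (x y : FreeGroup α) :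
    (x⁻¹ * y).norm + 2 * gromovProduct x y = x.norm + y.norm := by
  obtain ⟨p, x', y', -, -, hp, hx, hy, hxy⟩ := exists_mul_of_gromovProduct x y
  omega

theorem gromovProduct_comm (x y : FreeGroup α) : gromovProduct x y = gromovProduct y x := by
  have hxy := norm_inv_mul_add_two_mul_gromovProduct x y
  have hyx := norm_inv_mul_add_two_mul_gromovProduct y x
  rw [← norm_inv_eq, mul_inv_rev, inv_inv] at hyx
  omega

theorem norm_lt_norm_sq {y : FreeGroup α} (hy : y ≠ 1) : y.norm < (y ^ 2).norm := by
  set c := reduceCyclically.conjugator y.toWord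
  set r := reduceCyclically y.toWord
  have hword : c ++ r ++ invRev c = y.toWord :=
    reduceCyclically.conj_conjugator_reduceCyclically y.toWord
  have hr : r ≠ [] := by
    intro hr
    apply hy
    rw [← mk_toWord (x := y), ← hword, hr, List.append_nil, ← mul_mk, ← inv_mk, mul_inv_cancel]
  have hsq : (y ^ 2).toWord = c ++ (List.replicate 2 r).flatten ++ invRev c := by
    rw [toWord_pow, reduceCyclically.reduce_flatten_replicate_succ isReduced_toWord]
  rw [FreeGroup.norm, FreeGroup.norm, hsq, ← hword]
  have := List.length_pos_iff.mpr hr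
  simp only [List.length_append, List.length_flatten, List.map_replicate, List.sum_replicate,
    smul_eq_mul]
  omega

theorem two_mul_gromovProduct_inv_lt {y : FreeGroup α} (hy : y ≠ 1) :
    2 * gromovProduct y y⁻¹ < y.norm := by
  have h := norm_inv_mul_add_two_mul_gromovProduct y y⁻¹
  have hsq := norm_lt_norm_sq hy
  rw [← mul_inv_rev, ← sq, norm_inv_eq, norm_inv_eq] at h
  omega

end GromovProduct

section NielsenReduced

variable {α β : Type*} [DecidableEq α] [DecidableEq β]

theorem norm_eq_one_iff {x : FreeGroup α} : x.norm = 1 ↔ ∃ i, x = of i ∨ x = (of i)⁻¹ := by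
  constructor
  · intro hx
    obtain ⟨⟨i, s⟩, hi⟩ := List.length_eq_one_iff.mp hx
    have hmk : x = mk [(i, s)] := by rw [← hi, mk_toWord]
    refine ⟨i, ?_⟩
    cases s
    · exact .inr hmk
    · exact .inl hmk
  · rintro ⟨i, rfl | rfl⟩ <;> simp

theorem ne_one_of_norm_eq_one {x : FreeGroup α} (hx : x.norm = 1) : x ≠ 1 := by
  rintro rfl
  simp at hx

theorem exists_eq_letter_mul {x : FreeGroup α} (hx : x ≠ 1) :
    ∃ z y, z.norm = 1 ∧ x = z * y ∧ x.norm = y.norm + 1 := by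
  obtain ⟨c, L, hL⟩ := List.exists_cons_of_ne_nil (mt toWord_eq_nil_iff.mp hx)
  have hred : IsReduced (c :: L) := hL ▸ isReduced_toWord
  refine ⟨mk [c], mk L, rfl, ?_, ?_⟩
  · rw [mul_mk, List.singleton_append, ← hL, mk_toWord]
  · rw [norm_mk_of_isReduced (hred.infix (List.suffix_cons c L).isInfix), FreeGroup.norm, hL,
      List.length_cons]

/-- Nielsen's condition on the images of the letters (the elements of norm one): inside a product
of images, the cancellations on the two sides of a factor do not meet. -/
def IsNielsenReduced (φ : FreeGroup α →* FreeGroup β) : Prop :=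
  ∀ y g h : FreeGroup α, y.norm = 1 → g.norm = 1 → h.norm = 1 → g ≠ y → h ≠ y⁻¹ →
    gromovProduct (φ y) (φ g) + gromovProduct (φ y)⁻¹ (φ h) < (φ y).norm

theorem IsNielsenReduced.gromovProduct_eq_and_norm_add_le {φ : FreeGroup α →* FreeGroup β}
    (hφ : IsNielsenReduced φ) (x : FreeGroup α) :
    ∀ y g : FreeGroup α, y.norm = 1 → (y * x).norm = x.norm + 1 → g.norm = 1 → g ≠ y →
      gromovProduct (φ (y * x)) (φ g) = gromovProduct (φ y) (φ g) ∧
      x.norm + 1 + gromovProduct (φ y) (φ g) ≤ (φ (y * x)).norm := by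
  induction hn : x.norm generalizing x with
  | zero =>
    intro y g hy _ hg hgy
    have hred := hφ y g y hy hg hy hgy (self_ne_inv.mpr (ne_one_of_norm_eq_one hy))
    rw [norm_eq_zero.mp hn, mul_one]
    exact ⟨rfl, by omega⟩
  | succ n ih =>
    intro y g hy hyx hg hgy
    obtain ⟨z, x, hz, rfl, hx⟩ := exists_eq_letter_mul (x := x) (by rintro rfl; simp at hn)
    have hzy : z ≠ y⁻¹ := by
      rintro rfl
      rw [mul_inv_cancel_left] at hyx
      omega
    obtain ⟨ih_eq, ih_le⟩ :=
      ih x (by omega) z y⁻¹ hz (by omega) (by rwa [norm_inv_eq]) hzy.symm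
    have hred := hφ y g z hy hg hz hgy hzy
    rw [map_inv] at ih_eq ih_le
    rw [map_mul φ y]
    set u := φ y
    set q := φ (z * x)
    set w := φ g
    have huq_u := norm_inv_mul_add_two_mul_gromovProduct (u * q) u
    have hu_q := norm_inv_mul_add_two_mul_gromovProduct u⁻¹ q
    rw [mul_inv_rev, inv_mul_cancel_right, norm_inv_eq] at huq_u
    rw [inv_inv, norm_inv_eq, gromovProduct_comm, ih_eq] at hu_q
    rw [gromovProduct_comm (φ z)] at ih_le hu_q
    -- `u * q` shares more than `gromovProduct u w` letters with `u`, hence branches off `w` where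
    -- `u` does.
    have huq_w := min_gromovProduct_le (u * q) u w
    have hu_w := min_gromovProduct_le u (u * q) w
    rw [gromovProduct_comm u] at hu_w
    omega

theorem IsNielsenReduced.norm_le_norm_map {φ : FreeGroup α →* FreeGroup β}
    (hφ : IsNielsenReduced φ) (x : FreeGroup α) : x.norm ≤ (φ x).norm := by
  by_cases hx : x = 1
  · simp [hx]
  · obtain ⟨z, x, hz, rfl, hnorm⟩ := exists_eq_letter_mul hx
    have := (hφ.gromovProduct_eq_and_norm_add_le x z z⁻¹ hz hnorm (by rwa [norm_inv_eq])
      (self_ne_inv.mpr (ne_one_of_norm_eq_one hz)).symm).2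
    omega

theorem IsNielsenReduced.exists_letter_map_eq {φ : FreeGroup α →* FreeGroup β}
    (hφ : IsNielsenReduced φ) (hsurj : Function.Surjective φ) {z : FreeGroup β}
    (hz : z.norm = 1) : ∃ y, y.norm = 1 ∧ φ y = z := by
  obtain ⟨y, rfl⟩ := hsurj z
  have hle := hφ.norm_le_norm_map y
  have hne : y.norm ≠ 0 := by
    rw [Ne, FreeGroup.norm_eq_zero]
    rintro rfl
    simp at hz
  exact ⟨y, by omega, rfl⟩

end NielsenReduced

section Irreducible

variable {α : Type*} [DecidableEq α]

/-- The pair `(u, v)` is not shortened by replacing `v` with `u⁻¹ * v` and conjugating. -/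
def IsIrreduciblePair (u v : FreeGroup α) : Prop :=
  ∀ q, u.norm + v.norm ≤ (q * u * q⁻¹).norm + (q * (u⁻¹ * v) * q⁻¹).norm

theorem IsIrreduciblePair.two_mul_gromovProduct_le {u v : FreeGroup α}
    (h : IsIrreduciblePair u v) : 2 * gromovProduct u v ≤ u.norm := by
  have := norm_inv_mul_add_two_mul_gromovProduct u v
  have := h 1
  simp only [one_mul, inv_one, mul_one] at this
  omega

-- Here `u = p * x` and `v = p * t * x` without cancellation, where `p.norm = x.norm`; conjugation
-- by `x` takes `u` to `x * p` and `u⁻¹ * v` to `t`.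
theorem IsIrreduciblePair.two_mul_gromovProduct_inv_ne {u v : FreeGroup α}
    (h : IsIrreduciblePair u v) (hu : u ≠ 1) (huv : 2 * gromovProduct u v = u.norm)
    (hle : u.norm ≤ v.norm) : 2 * gromovProduct u⁻¹ v⁻¹ ≠ u.norm := by
  intro hinv
  have hpos : u.norm ≠ 0 := mt FreeGroup.norm_eq_zero.mp hu
  obtain ⟨p, x, y, hpx, hpy, hp, hnu, hnv, -⟩ := exists_mul_of_gromovProduct u v
  have hxu := norm_inv_mul_add_two_mul_gromovProduct x⁻¹ u⁻¹
  have hvy := norm_inv_mul_add_two_mul_gromovProduct v⁻¹ y⁻¹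
  have hxy := norm_inv_mul_add_two_mul_gromovProduct x⁻¹ y⁻¹
  rw [show x⁻¹⁻¹ * u⁻¹ = p⁻¹ by rw [hpx]; group] at hxu
  rw [show v⁻¹⁻¹ * y⁻¹ = p by rw [hpy]; group] at hvy
  rw [show x⁻¹⁻¹ * y⁻¹ = (y * x⁻¹)⁻¹ by group] at hxy
  simp only [norm_inv_eq] at hxu hvy hxy
  have hx_v := min_gromovProduct_le x⁻¹ u⁻¹ v⁻¹
  have hx_y := min_gromovProduct_le x⁻¹ v⁻¹ y⁻¹
  have hirr := h x
  rw [show x * u * x⁻¹ = x * p by rw [hpx]; group,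
    show x * (u⁻¹ * v) * x⁻¹ = y * x⁻¹ by rw [hpx, hpy]; group] at hirr
  have hxp := norm_mul_le x p
  omega

end Irreducible

section RankTwo

@[elab_as_elim]
theorem letter_pair_induction {P : FreeGroup (Fin 2) → FreeGroup (Fin 2) → Prop}
    (base : P (of 0) (of 1)) (swap : ∀ y g, P y g → P g y) (inv : ∀ y g, P y g → P y⁻¹ g)
    {y g : FreeGroup (Fin 2)} (hy : y.norm = 1) (hg : g.norm = 1) (hgy : g ≠ y) (hgy' : g ≠ y⁻¹) :
    P y g := by
  obtain ⟨i, hi⟩ := norm_eq_one_iff.mp hy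
  obtain ⟨j, hj⟩ := norm_eq_one_iff.mp hg
  have hij : i ≠ j := by
    rintro rfl
    rcases hi with rfl | rfl <;> rcases hj with rfl | rfl <;> simp at hgy hgy'
  have hof : P (of i) (of j) := by
    fin_cases i <;> fin_cases j
    · exact absurd rfl hij
    · exact base
    · exact swap _ _ base
    · exact absurd rfl hij
  have hofg : P (of i) g := by
    rcases hj with rfl | rfl
    · exact hof
    · exact swap _ _ (inv _ _ (swap _ _ hof))
  rcases hi with rfl | rfl
  · exact hofg
  · exact inv _ _ hofg

theorem exists_letter_ne {y : FreeGroup (Fin 2)} (hy : y.norm = 1) :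
    ∃ g, g.norm = 1 ∧ g ≠ y ∧ g ≠ y⁻¹ := by
  obtain ⟨i, hi⟩ := norm_eq_one_iff.mp hy
  refine ⟨of (i + 1), norm_of _, ?_⟩
  fin_cases i <;> rcases hi with rfl | rfl <;> decide

theorem letter_eq_or_eq_inv {y g h : FreeGroup (Fin 2)} (hy : y.norm = 1) (hg : g.norm = 1)
    (hh : h.norm = 1) (hgy : g ≠ y) (hgy' : g ≠ y⁻¹) (hhy : h ≠ y) (hhy' : h ≠ y⁻¹) :
    h = g ∨ h = g⁻¹ := by
  obtain ⟨i, hi⟩ := norm_eq_one_iff.mp hy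
  obtain ⟨j, hj⟩ := norm_eq_one_iff.mp hg
  obtain ⟨k, hk⟩ := norm_eq_one_iff.mp hh
  have hij : j ≠ i := by rintro rfl; grind [inv_inv]
  have hik : k ≠ i := by rintro rfl; grind [inv_inv]
  obtain rfl : k = j := by omega
  grind [inv_inv]

theorem isNielsenReduced_of_isIrreduciblePair {α : Type*} [DecidableEq α]
    {φ : FreeGroup (Fin 2) →* FreeGroup α} (hne : ∀ y, y.norm = 1 → φ y ≠ 1)
    (hirr : ∀ y g, y.norm = 1 → g.norm = 1 → g ≠ y → g ≠ y⁻¹ → IsIrreduciblePair (φ y) (φ g)) :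
    IsNielsenReduced φ := by
  have inv_lt {y : FreeGroup (Fin 2)} (hy : y.norm = 1) := two_mul_gromovProduct_inv_lt (hne y hy)
  have two_mul_le {y g : FreeGroup (Fin 2)} (hy : y.norm = 1) (hg : g.norm = 1) (hgy : g ≠ y) :
      2 * gromovProduct (φ y) (φ g) ≤ (φ y).norm := by
    by_cases hgy' : g = y⁻¹
    · rw [hgy', map_inv]
      exact (inv_lt hy).le
    · exact (hirr y g hy hg hgy hgy').two_mul_gromovProduct_le
  have two_mul_inv_le {y h : FreeGroup (Fin 2)} (hy : y.norm = 1) (hh : h.norm = 1)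
      (hhy : h ≠ y⁻¹) : 2 * gromovProduct (φ y)⁻¹ (φ h) ≤ (φ y).norm := by
    simpa only [map_inv, norm_inv_eq] using two_mul_le (y := y⁻¹) (by rwa [norm_inv_eq]) hh hhy
  intro y g h hy hg hh hgy hhy
  have hg_le := two_mul_le hy hg hgy
  have hh_le := two_mul_inv_le hy hh hhy
  have hy_lt := inv_lt hy
  by_cases hgy' : g = y⁻¹
  · rw [hgy', map_inv]
    omega
  by_cases hhy' : h = y
  · rw [hhy', gromovProduct_comm (φ y)⁻¹]
    omega
  obtain rfl | rfl := letter_eq_or_eq_inv hy hg hh hgy hgy' hhy' hhy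
  · have hultra := min_gromovProduct_le (φ y) (φ h) (φ y)⁻¹
    rw [gromovProduct_comm (φ h)] at hultra
    omega
  · rw [map_inv] at hh_le ⊢
    by_contra! hlt
    have hg_le' := two_mul_le hg hy hgy.symm
    rw [gromovProduct_comm] at hg_le'
    exact (hirr y g hy hg hgy hgy').two_mul_gromovProduct_inv_ne (hne y hy) (by omega) (by omega)
      (by omega)

theorem IsNielsenReduced.exists_letter_pair_map_eq {φ : FreeGroup (Fin 2) →* FreeGroup (Fin 2)}
    (hφ : IsNielsenReduced φ) (hsurj : Function.Surjective φ) :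
    ∃ s t, s.norm = 1 ∧ t.norm = 1 ∧ t ≠ s ∧ t ≠ s⁻¹ ∧ φ s = of 0 ∧ φ t = of 1 := by
  obtain ⟨s, hs, hs₀⟩ := hφ.exists_letter_map_eq hsurj (norm_of 0)
  obtain ⟨t, ht, ht₁⟩ := hφ.exists_letter_map_eq hsurj (norm_of 1)
  refine ⟨s, t, hs, ht, ?_, ?_, hs₀, ht₁⟩
  · rintro rfl
    exact zero_ne_one (of_injective (hs₀.symm.trans ht₁))
  · rintro rfl
    rw [map_inv, hs₀] at ht₁
    revert ht₁
    decide

end RankTwo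

section GeneratingPairs

theorem closure_pair_inv_left {G : Type*} [Group G] (x y : G) :
    Subgroup.closure {x⁻¹, y} = Subgroup.closure {x, y} := by
  simp only [Set.insert_eq, Subgroup.closure_union, Subgroup.closure_singleton_inv]

theorem closure_pair_inv_mul {G : Type*} [Group G] (x y : G) :
    Subgroup.closure {x, x⁻¹ * y} = Subgroup.closure {x, y} := by
  apply le_antisymm <;> rw [Subgroup.closure_le, Set.pair_subset_iff]
  · have hx : x ∈ Subgroup.closure {x, y} := Subgroup.subset_closure (by simp)
    have hy : y ∈ Subgroup.closure {x, y} := Subgroup.subset_closure (by simp)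
    exact ⟨hx, mul_mem (inv_mem hx) hy⟩
  · have hx : x ∈ Subgroup.closure {x, x⁻¹ * y} := Subgroup.subset_closure (by simp)
    have hxy : x⁻¹ * y ∈ Subgroup.closure {x, x⁻¹ * y} := Subgroup.subset_closure (by simp)
    exact ⟨hx, by simpa using mul_mem hx hxy⟩

theorem closure_pair_conj_eq_top {G : Type*} [Group G] {x y : G}
    (h : Subgroup.closure {x, y} = ⊤) (q : G) :
    Subgroup.closure {q * x * q⁻¹, q * y * q⁻¹} = ⊤ := by
  have := congrArg (Subgroup.map (MulAut.conj q).toMonoidHom) h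
  rw [MonoidHom.map_closure, Set.image_pair,
    Subgroup.map_top_of_surjective _ (MulAut.conj q).surjective] at this
  exact this

theorem ne_one_of_closure_pair_eq_top {u v : FreeGroup (Fin 2)}
    (h : Subgroup.closure {u, v} = ⊤) : u ≠ 1 := by
  rintro rfl
  have hmem (x : FreeGroup (Fin 2)) : x ∈ Subgroup.zpowers v := by
    rw [Subgroup.zpowers_eq_closure, ← Subgroup.closure_insert_one, h]
    trivial
  obtain ⟨m, hm⟩ := hmem (of 0)
  obtain ⟨n, hn⟩ := hmem (of 1)
  have hcomm : of (0 : Fin 2) * of 1 = of 1 * of 0 := by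
    rw [← hm, ← hn]
    exact zpow_mul_comm v m n
  revert hcomm
  decide

theorem isConjStandard_of_closure_pair_eq_top {x y : FreeGroup (Fin 2)}
    (hxy : Subgroup.closure {x, y} = ⊤) : IsConjStandard (of 0) (of 1) x y := by
  induction hn : x.norm + y.norm using Nat.strong_induction_on generalizing x y with
  | _ n ih =>
  by_contra hstd
  set φ : FreeGroup (Fin 2) →* FreeGroup (Fin 2) := FreeGroup.lift ![x, y] with hφ
  have hpair {s t : FreeGroup (Fin 2)} (hs : s.norm = 1) (ht : t.norm = 1) (hts : t ≠ s)
      (hts' : t ≠ s⁻¹) : Subgroup.closure {φ s, φ t} = ⊤ ∧ (φ s).norm + (φ t).norm = n ∧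
        ¬ IsConjStandard (of 0) (of 1) (φ s) (φ t) := by
    refine letter_pair_induction ?_ ?_ ?_ hs ht hts hts'
    · simpa [hφ] using ⟨hxy, hn, hstd⟩
    · rintro s t ⟨hgen, hnorm, hstd⟩
      exact ⟨by rwa [Set.pair_comm], by rwa [add_comm], fun h ↦ hstd h.swap⟩
    · rintro s t ⟨hgen, hnorm, hstd⟩
      rw [map_inv, closure_pair_inv_left, norm_inv_eq]
      exact ⟨hgen, hnorm, fun h ↦ hstd (by simpa using h.inv_left)⟩
  have hirr (s t : FreeGroup (Fin 2)) (hs : s.norm = 1) (ht : t.norm = 1) (hts : t ≠ s)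
      (hts' : t ≠ s⁻¹) : IsIrreduciblePair (φ s) (φ t) := by
    obtain ⟨hgen, hnorm, hstd⟩ := hpair hs ht hts hts'
    intro q
    by_contra! hq
    have hgen' := closure_pair_conj_eq_top ((closure_pair_inv_mul _ _).trans hgen) q
    have hstd' := (ih _ (hnorm ▸ hq) hgen' rfl).of_conj.mul_right
    exact hstd (by simpa using hstd')
  have hne (s : FreeGroup (Fin 2)) (hs : s.norm = 1) : φ s ≠ 1 := by
    obtain ⟨t, ht, hts, hts'⟩ := exists_letter_ne hs
    exact ne_one_of_closure_pair_eq_top (hpair hs ht hts hts').1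
  have hsurj : Function.Surjective φ := by
    rw [← MonoidHom.range_eq_top, hφ, FreeGroup.range_lift_eq_closure, Matrix.range_cons_cons_empty,
      hxy]
  have hreduced := isNielsenReduced_of_isIrreduciblePair hne hirr
  obtain ⟨s, t, hs, ht, hts, hts', hs₀, ht₁⟩ := hreduced.exists_letter_pair_map_eq hsurj
  have hletters := (hpair hs ht hts hts').2.2
  rw [hs₀, ht₁] at hletters
  exact hletters (.of_standardPair (.inl rfl) (.inl rfl) .base)

end GeneratingPairs

section Abelianization

theorem map_eq_of_abelianization_of_eq {G A : Type*} [Group G] [CommGroup A] {x y : G}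
    (h : Abelianization.of x = Abelianization.of y) (f : G →* A) : f x = f y := by
  rw [← Abelianization.lift_apply_of f x, h, Abelianization.lift_apply_of]

theorem abelianization_of_injOn_letters {α : Type*} [DecidableEq α] :
    Set.InjOn Abelianization.of {x : FreeGroup α | x.norm = 1} := by
  intro x hx y hy hxy
  obtain ⟨i, hi⟩ := norm_eq_one_iff.mp hx
  obtain ⟨j, hj⟩ := norm_eq_one_iff.mp hy
  let exponent : FreeGroup α →* Multiplicative ℤ :=
    FreeGroup.lift fun k ↦ if k = i then .ofAdd 1 else 1
  have h := congrArg Multiplicative.toAdd (map_eq_of_abelianization_of_eq hxy exponent)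
  by_cases hij : j = i
  · subst hij
    rcases hi with rfl | rfl <;> rcases hj with rfl | rfl <;> simp [exponent] at h ⊢
  · rcases hi with rfl | rfl <;> rcases hj with rfl | rfl <;> simp [exponent, hij] at h

theorem exists_hom_toAdd_letters_eq_one {α β : FreeGroup (Fin 2)}
    (hα : α = of 0 ∨ α = (of 0)⁻¹) (hβ : β = of 1 ∨ β = (of 1)⁻¹) :
    ∃ e : FreeGroup (Fin 2) →* Multiplicative ℤ, (e α).toAdd = 1 ∧ (e β).toAdd = 1 := by
  have exists_hom (m n : ℤ) : ∃ e : FreeGroup (Fin 2) →* Multiplicative ℤ,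
      (e (of 0)).toAdd = m ∧ (e (of 1)).toAdd = n :=
    ⟨FreeGroup.lift ![.ofAdd m, .ofAdd n], by simp⟩
  rcases hα with rfl | rfl <;> rcases hβ with rfl | rfl
  · exact exists_hom 1 1
  · simpa [neg_eq_iff_eq_neg] using exists_hom 1 (-1)
  · simpa [neg_eq_iff_eq_neg] using exists_hom (-1) 1
  · simpa [neg_eq_iff_eq_neg] using exists_hom (-1) (-1)

theorem toAdd_eq_one_of_eq_or_eq_inv {G : Type*} [Group G] {x y : G}
    (e : G →* Multiplicative ℤ) (hxy : x = y ∨ x = y⁻¹) (hx : |(e x).toAdd| = 1)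
    (hy : 0 < (e y).toAdd) : (e y).toAdd = 1 := by
  rcases hxy with rfl | rfl
  · rwa [abs_of_pos hy] at hx
  · rwa [map_inv, toAdd_inv, abs_neg, abs_of_pos hy] at hx

theorem norm_eq_one_of_eq_or_eq_inv {α : Type*} [DecidableEq α] {x y : FreeGroup α}
    (hxy : x = y ∨ x = y⁻¹) (hy : y.norm = 1) : x.norm = 1 := by
  rcases hxy with rfl | rfl
  · exact hy
  · rwa [norm_inv_eq]

theorem IsConjStandard.exists_conj_eq_of_abelianization {x y : FreeGroup (Fin 2)}
    (h : IsConjStandard (of 0) (of 1) x y) (hx : Abelianization.of x = Abelianization.of (of 0))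
    (hy : Abelianization.of y = Abelianization.of (of 1)) :
    ∃ w, x = w * of 0 * w⁻¹ ∧ y = w * of 1 * w⁻¹ := by
  obtain ⟨α, β, u, v, g, hα, hβ, huv, hxu, hyv⟩ := h
  have hgx : Abelianization.of (g * x * g⁻¹) = Abelianization.of (of 0) := by simp [hx]
  have hgy : Abelianization.of (g * y * g⁻¹) = Abelianization.of (of 1) := by simp [hy]
  obtain ⟨e, heα, heβ⟩ := exists_hom_toAdd_letters_eq_one hα hβ
  have hx_abs : |(e (g * x * g⁻¹)).toAdd| = 1 := by
    rw [map_eq_of_abelianization_of_eq hgx]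
    rcases hα with rfl | rfl <;> simp_all [neg_eq_iff_eq_neg]
  have hy_abs : |(e (g * y * g⁻¹)).toAdd| = 1 := by
    rw [map_eq_of_abelianization_of_eq hgy]
    rcases hβ with rfl | rfl <;> simp_all [neg_eq_iff_eq_neg]
  have hpos := huv.toAdd_pos e heα heβ
  have hα_norm : α.norm = 1 := norm_eq_one_of_eq_or_eq_inv hα (norm_of 0)
  have hβ_norm : β.norm = 1 := norm_eq_one_of_eq_or_eq_inv hβ (norm_of 1)
  have hnorm : u.norm = 1 ∧ v.norm = 1 := by
    rcases huv.eq_or_swap_eq e heα heβ (toAdd_eq_one_of_eq_or_eq_inv e hxu hx_abs hpos.1)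
      (toAdd_eq_one_of_eq_or_eq_inv e hyv hy_abs hpos.2) with ⟨rfl, rfl⟩ | ⟨rfl, rfl⟩
    · exact ⟨hα_norm, hβ_norm⟩
    · exact ⟨hβ_norm, hα_norm⟩
  refine ⟨g⁻¹, ?_, ?_⟩
  · rw [← abelianization_of_injOn_letters (norm_eq_one_of_eq_or_eq_inv hxu hnorm.1) (norm_of 0) hgx]
    group
  · rw [← abelianization_of_injOn_letters (norm_eq_one_of_eq_or_eq_inv hyv hnorm.2) (norm_of 1) hgy]
    group

end Abelianization

end StandardPairs

open FreeGroup in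
theorem aut_F2_trivial_on_abelianization_is_inner_general
    (φ : FreeGroup (Fin 2) →* FreeGroup (Fin 2)) (hφ : Function.Surjective φ)
    (h : ∀ x : FreeGroup (Fin 2), Abelianization.of (φ x) = Abelianization.of x) :
    ∃ w : FreeGroup (Fin 2), φ = (MulAut.conj w).toMonoidHom := by
  have hgen : Subgroup.closure {φ (of 0), φ (of 1)} = ⊤ := by
    have hrange : Set.range (of : Fin 2 → FreeGroup (Fin 2)) = {of 0, of 1} := by
      ext x
      simp [Fin.exists_fin_two, eq_comm]
    rw [← Set.image_pair, ← hrange, ← MonoidHom.map_closure, FreeGroup.closure_range_of,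
      Subgroup.map_top_of_surjective φ hφ]
  obtain ⟨w, hw₀, hw₁⟩ :=
    (StandardPairs.isConjStandard_of_closure_pair_eq_top hgen).exists_conj_eq_of_abelianization
      (h _) (h _)
  refine ⟨w, FreeGroup.ext_hom _ _ fun i ↦ ?_⟩
  fin_cases i
  · exact hw₀
  · exact hw₁

/-- Every automorphism of the free group `F₂` on two generators that induces the identity
on the abelianization of `F₂` is an inner automorphism (i.e. the kernel of the natural map
`Aut(F₂) → GL₂(ℤ)` is exactly `Inn(F₂)`). -/
theorem aut_F2_trivial_on_abelianization_is_inner (φ : MulAut (FreeGroup (Fin 2)))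
    (h : ∀ x : FreeGroup (Fin 2), Abelianization.of (φ x) = Abelianization.of x) :
    ∃ w : FreeGroup (Fin 2), φ = MulAut.conj w := by
  obtain ⟨w, hw⟩ := aut_F2_trivial_on_abelianization_is_inner_general φ.toMonoidHom φ.surjective h
  exact ⟨w, MulEquiv.toMonoidHom_injective hw⟩
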